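/- arXiv:2207.10483 — 3 statements merged into one kernel-verified Lean document; each statement's English description precedes it below -/
import Mathlib

section
/- Let H, G_1, …, G_r be finite simple graphs and q ≥ 1 an integer. If there is a cohomomorphism witnessing H̄ ⊗ Q_q ≤ ⊕_{d=1}^r Ḡ_d ⊗ Q_d, then already H̄ ⊗ Q_q ≤ ⊕_{d=q}^r Ḡ_d ⊗ Q_d, i.e. the direct sum on the right-hand side can be restricted to the summands with index d ≥ q. -/
open scoped Kronecker
open Matrix

namespace NCG

/-- Existence of a cohomomorphism from `T` to `S` (written `T ≤ S`). -/
def Cohom {A B : Type} [Fintype A] [DecidableEq A] [Fintype B] [DecidableEq B]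
    (T : Submodule ℂ (Matrix B B ℂ)) (S : Submodule ℂ (Matrix A A ℂ)) : Prop :=
  ∃ (k : ℕ) (E : Fin k → Matrix A B ℂ),
    (∑ i, (E i)ᴴ * E i) = 1 ∧ ∀ i j : Fin k, ∀ M ∈ S, (E i)ᴴ * M * E j ∈ T

/-- The noncommutative graph `Ḡ` of a classical graph `G`. -/
noncomputable def graphNC {V : Type} [Fintype V] [DecidableEq V] (G : SimpleGraph V) :
    Submodule ℂ (Matrix V V ℂ) :=
  Submodule.span ℂ {M | ∃ x y : V, (G.Adj x y ∨ x = y) ∧ M = Matrix.single x y 1}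

/-- The confusability graph `Q_d = ℂ·I_d` of the noiseless `d`-dimensional quantum channel. -/
noncomputable def qGraph (d : ℕ) : Submodule ℂ (Matrix (Fin d) (Fin d) ℂ) :=
  Submodule.span ℂ {(1 : Matrix (Fin d) (Fin d) ℂ)}

/-- Tensor product of noncommutative graphs. -/
noncomputable def ncTensor {A B : Type} [Fintype A] [DecidableEq A] [Fintype B] [DecidableEq B]
    (S : Submodule ℂ (Matrix A A ℂ)) (T : Submodule ℂ (Matrix B B ℂ)) :
    Submodule ℂ (Matrix (A × B) (A × B) ℂ) :=
  Submodule.span ℂ {M | ∃ X ∈ S, ∃ Y ∈ T, M = X ⊗ₖ Y}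

/-- Direct sum of a finite family of noncommutative graphs. -/
noncomputable def ncDirectSum {ι : Type} [Fintype ι] [DecidableEq ι] {V : ι → Type}
    [∀ i, Fintype (V i)] [∀ i, DecidableEq (V i)]
    (S : ∀ i, Submodule ℂ (Matrix (V i) (V i) ℂ)) :
    Submodule ℂ (Matrix (Σ i, V i) (Σ i, V i) ℂ) where
  carrier := {M | (∀ p q : Σ i, V i, p.1 ≠ q.1 → M p q = 0) ∧
    ∀ i, (Matrix.of fun x y : V i => M ⟨i, x⟩ ⟨i, y⟩) ∈ S i}
  add_mem' := by
    rintro a b ⟨ha1, ha2⟩ ⟨hb1, hb2⟩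
    refine ⟨fun p q h => ?_, fun i => ?_⟩
    · simp [Matrix.add_apply, ha1 p q h, hb1 p q h]
    · have h := (S i).add_mem (ha2 i) (hb2 i)
      exact h
  zero_mem' := by
    refine ⟨fun p q h => rfl, fun i => ?_⟩
    have h0 : (Matrix.of fun x y : V i =>
        (0 : Matrix (Σ j, V j) (Σ j, V j) ℂ) ⟨i, x⟩ ⟨i, y⟩) = 0 := rfl
    rw [h0]
    exact (S i).zero_mem
  smul_mem' := by
    rintro c a ⟨ha1, ha2⟩
    refine ⟨fun p q h => ?_, fun i => ?_⟩
    · simp [Matrix.smul_apply, ha1 p q h]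
    · have h := (S i).smul_mem c (ha2 i)
      exact h

/-- `⊕_{d=1}^r Ḡ_d ⊗ Q_d`, where `G d` plays the role of `G_{d+1}` for `d : Fin r`. -/
noncomputable def bigSum {r : ℕ} {V : Fin r → Type} [∀ d, Fintype (V d)] [∀ d, DecidableEq (V d)]
    (G : ∀ d, SimpleGraph (V d)) :
    Submodule ℂ (Matrix (Σ d : Fin r, V d × Fin (d.1 + 1))
      (Σ d : Fin r, V d × Fin (d.1 + 1)) ℂ) :=
  ncDirectSum fun d : Fin r => ncTensor (graphNC (G d)) (qGraph (d.1 + 1))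

/-!
A cohomomorphism to a direct sum splits into blocks, one for each `E_i` and each summand, and the
condition on the `E_i* M E_j` can be imposed one summand at a time. Let `E` be a block at the
summand `Ḡ_d ⊗ Q_d`, and `F` the `d × q` matrix of its entries at a vertex `x` of `G_d` and a
vertex `a` of `H`. As `|x⟩⟨x| ⊗ 1` belongs to `Ḡ_d ⊗ Q_d`, its conjugate by `E` belongs to
`H̄ ⊗ Q_q`, so `F* F`, the block of this conjugate at `(a, a)`, is scalar. Its rank is at most `d`,
so `F = 0` when `d < q`: the blocks at the summands with `d < q` vanish and can be dropped.
-/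

section

theorem eq_zero_of_conjTranspose_mul_self_eq_smul_one {K m n : Type*} [Field K] [PartialOrder K]
    [StarRing K] [StarOrderedRing K] [Fintype m] [Fintype n] [DecidableEq n]
    (hmn : Fintype.card m < Fintype.card n) {F : Matrix m n K} {c : K} (hF : Fᴴ * F = c • 1) :
    F = 0 := by
  obtain rfl | hc := eq_or_ne c 0
  · rwa [zero_smul, conjTranspose_mul_self_eq_zero] at hF
  · refine absurd hmn (not_lt.2 ?_)
    calc
      Fintype.card n = (Fᴴ * F).rank := by
        rw [hF, rank_smul_of_mem_nonZeroDivisors _ (mem_nonZeroDivisors_of_ne_zero hc), rank_one]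
      _ ≤ F.rank := rank_mul_le_right Fᴴ F
      _ ≤ Fintype.card m := rank_le_card_height F

theorem mul_eq_sum_submatrix_sigma {R ι l n : Type*} {m : ι → Type*} [NonUnitalNonAssocSemiring R]
    [Fintype ι] [∀ i, Fintype (m i)] (X : Matrix l (Σ i, m i) R) (Y : Matrix (Σ i, m i) n R) :
    X * Y = ∑ i, X.submatrix id (Sigma.mk i) * Y.submatrix (Sigma.mk i) id := by
  ext a b
  simp only [mul_apply, Fintype.sum_sigma, Matrix.sum_apply, submatrix_apply, id]

theorem submatrix_blockDiagonal'_mul {R ι n : Type*} {l m : ι → Type*}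
    [NonUnitalNonAssocSemiring R] [Fintype ι] [DecidableEq ι] [∀ i, Fintype (m i)]
    (B : ∀ i, Matrix (l i) (m i) R) (Y : Matrix (Σ i, m i) n R) (i : ι) :
    (blockDiagonal' B * Y).submatrix (Sigma.mk i) id = B i * Y.submatrix (Sigma.mk i) id := by
  ext x b
  rw [submatrix_apply, mul_apply, Fintype.sum_sigma, Fintype.sum_eq_single i]
  · simp only [blockDiagonal'_apply_eq, mul_apply, submatrix_apply, id]
  · intro j hj
    simp only [blockDiagonal'_apply_ne B _ _ hj.symm, zero_mul, Finset.sum_const_zero]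

theorem mul_single_kronecker_one_mul {R l m n o : Type*} [Semiring R] [Fintype m] [DecidableEq m]
    [Fintype n] [DecidableEq n] (X : Matrix l (m × n) R) (x y : m) (Y : Matrix (m × n) o R) :
    X * (single x y 1 ⊗ₖ (1 : Matrix n n R)) * Y =
      X.submatrix id (Prod.mk x) * Y.submatrix (Prod.mk y) id := by
  ext a b
  simp [mul_apply, Fintype.sum_prod_type, single_apply, one_apply, ite_and]

end

section

variable {ι A B : Type} [Fintype ι] [DecidableEq ι] [Fintype A] [DecidableEq A]
  [Fintype B] [DecidableEq B] {V : ι → Type} [∀ i, Fintype (V i)] [∀ i, DecidableEq (V i)]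

theorem mem_ncDirectSum_iff {S : ∀ i, Submodule ℂ (Matrix (V i) (V i) ℂ)}
    {M : Matrix (Σ i, V i) (Σ i, V i) ℂ} :
    M ∈ ncDirectSum S ↔
      ∃ D : ∀ i, Matrix (V i) (V i) ℂ, (∀ i, D i ∈ S i) ∧ blockDiagonal' D = M := by
  constructor
  · rintro ⟨hoff, hdiag⟩
    refine ⟨blockDiag' M, hdiag, ?_⟩
    ext ⟨i, x⟩ ⟨j, y⟩
    obtain rfl | hij := eq_or_ne i j
    · exact blockDiagonal'_apply_eq _ _ _ _
    · rw [blockDiagonal'_apply_ne _ _ _ hij, hoff _ _ hij]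
  · rintro ⟨D, hD, rfl⟩
    refine ⟨fun p p' hp => blockDiagonal'_apply_ne D _ _ hp, fun i => ?_⟩
    change blockDiag' (blockDiagonal' D) i ∈ S i
    rw [blockDiag'_blockDiagonal']
    exact hD i

theorem cohom_ncDirectSum_iff {T : Submodule ℂ (Matrix B B ℂ)}
    {S : ∀ i, Submodule ℂ (Matrix (V i) (V i) ℂ)} :
    Cohom T (ncDirectSum S) ↔ ∃ (k : ℕ) (E : Fin k → ∀ i, Matrix (V i) B ℂ),
      (∑ a, ∑ i, (E a i)ᴴ * E a i) = 1 ∧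
        ∀ a b i, ∀ M ∈ S i, (E a i)ᴴ * M * E b i ∈ T := by
  constructor
  · rintro ⟨k, E, hE, hmem⟩
    refine ⟨k, fun a i => (E a).submatrix (Sigma.mk i) id, ?_, fun a b i M hM => ?_⟩
    · simp only [mul_eq_sum_submatrix_sigma] at hE
      exact hE
    · have hsingle : ∀ j, (Pi.single i M : ∀ j, Matrix (V j) (V j) ℂ) j ∈ S j := fun j => by
        obtain rfl | hj := eq_or_ne j i
        · rwa [Pi.single_eq_same]
        · rw [Pi.single_eq_of_ne hj]
          exact (S j).zero_mem
      have h := hmem a b _ (mem_ncDirectSum_iff.2 ⟨_, hsingle, rfl⟩)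
      rw [Matrix.mul_assoc, mul_eq_sum_submatrix_sigma, Fintype.sum_eq_single i] at h
      · rwa [submatrix_blockDiagonal'_mul, Pi.single_eq_same, ← Matrix.mul_assoc] at h
      · intro j hj
        rw [submatrix_blockDiagonal'_mul, Pi.single_eq_of_ne hj, Matrix.zero_mul, Matrix.mul_zero]
  · rintro ⟨k, E, hE, hmem⟩
    refine ⟨k, fun a => of fun p => E a p.1 p.2, ?_, fun a b M hM => ?_⟩
    · simp only [mul_eq_sum_submatrix_sigma]
      exact hE
    · obtain ⟨D, hD, rfl⟩ := mem_ncDirectSum_iff.1 hM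
      rw [Matrix.mul_assoc, mul_eq_sum_submatrix_sigma]
      refine T.sum_mem fun i _ => ?_
      rw [submatrix_blockDiagonal'_mul, ← Matrix.mul_assoc]
      exact hmem a b i _ (hD i)

theorem submatrix_mem_of_mem_ncTensor {S : Submodule ℂ (Matrix A A ℂ)}
    {T : Submodule ℂ (Matrix B B ℂ)} {N : Matrix (A × B) (A × B) ℂ} (hN : N ∈ ncTensor S T)
    (a a' : A) : N.submatrix (Prod.mk a) (Prod.mk a') ∈ T := by
  induction hN using Submodule.span_induction with
  | mem N hN =>
    obtain ⟨X, -, Y, hY, rfl⟩ := hN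
    exact T.smul_mem (X a a') hY
  | zero => exact T.zero_mem
  | add M N _ _ hM hN => exact T.add_mem hM hN
  | smul c M _ hM => exact T.smul_mem c hM

open scoped ComplexOrder in
theorem eq_zero_of_forall_conj_mem_ncTensor_qGraph {d q : ℕ} (hdq : d < q)
    {S : Submodule ℂ (Matrix A A ℂ)} (hS : ∀ x, single x x 1 ∈ S) {T : Submodule ℂ (Matrix B B ℂ)}
    {E : Matrix (A × Fin d) (B × Fin q) ℂ}
    (hE : ∀ M ∈ ncTensor S (qGraph d), Eᴴ * M * E ∈ ncTensor T (qGraph q)) : E = 0 := by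
  have hblock : ∀ x b, E.submatrix (Prod.mk x) (Prod.mk b) = 0 := fun x b => by
    have hconj := hE _ <|
      Submodule.subset_span ⟨_, hS x, 1, Submodule.mem_span_singleton_self 1, rfl⟩
    rw [mul_single_kronecker_one_mul] at hconj
    obtain ⟨c, hc⟩ := Submodule.mem_span_singleton.1 (submatrix_mem_of_mem_ncTensor hconj b b)
    exact eq_zero_of_conjTranspose_mul_self_eq_smul_one (by simpa using hdq) hc.symm
  ext ⟨x, s⟩ ⟨b, t⟩
  exact congrFun₂ (hblock x b) s t

theorem single_self_mem_graphNC (G : SimpleGraph A) (x : A) : single x x 1 ∈ graphNC G :=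
  Submodule.subset_span ⟨x, x, Or.inr rfl, rfl⟩

theorem restrict_to_large_summands_general (n : ι → ℕ)
    {S : ∀ i, Submodule ℂ (Matrix (V i) (V i) ℂ)} (hS : ∀ i x, single x x 1 ∈ S i)
    {T : Submodule ℂ (Matrix B B ℂ)} {q : ℕ}
    (h : Cohom (ncTensor T (qGraph q)) (ncDirectSum fun i => ncTensor (S i) (qGraph (n i)))) :
    Cohom (ncTensor T (qGraph q))
      (ncDirectSum fun i : {i // q ≤ n i} => ncTensor (S i.1) (qGraph (n i.1))) := by
  obtain ⟨k, E, hE, hmem⟩ := cohom_ncDirectSum_iff.1 h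
  have hsmall : ∀ a i, ¬ q ≤ n i → E a i = 0 := fun a i hi =>
    eq_zero_of_forall_conj_mem_ncTensor_qGraph (not_le.1 hi) (hS i) (hmem a a i)
  refine cohom_ncDirectSum_iff.2 ⟨k, fun a i => E a i.1, ?_, fun a b i => hmem a b i.1⟩
  rw [← hE]
  refine Finset.sum_congr rfl fun a _ =>
    Fintype.sum_of_injective Subtype.val Subtype.val_injective _ _ (fun i hi => ?_) fun _ => rfl
  rw [hsmall a i fun hqi => hi ⟨⟨i, hqi⟩, rfl⟩, Matrix.mul_zero]

end

theorem restrict_to_large_summands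
    {r : ℕ} {V : Fin r → Type} [∀ d, Fintype (V d)] [∀ d, DecidableEq (V d)]
    (G : ∀ d, SimpleGraph (V d))
    {VH : Type} [Fintype VH] [DecidableEq VH] (H : SimpleGraph VH)
    (q : ℕ) (hq : 1 ≤ q)
    (h : Cohom (ncTensor (graphNC H) (qGraph q)) (bigSum G)) :
    Cohom (ncTensor (graphNC H) (qGraph q))
      (ncDirectSum fun d : {d : Fin r // q ≤ d.1 + 1} =>
        ncTensor (graphNC (G d.1)) (qGraph (d.1.1 + 1))) :=
  restrict_to_large_summands_general (fun d : Fin r => d.1 + 1)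
    (fun d => single_self_mem_graphNC (G d)) h

end NCG
end

section
/- The fractional clique cover number χ̄_f admits no admissible exponent: for every real number α there exist finite simple graphs H_1, …, H_r and G_1, …, G_r such that ⊕_{d=1}^r H̄_d ⊗ Q_d ≤ ⊕_{d=1}^r Ḡ_d ⊗ Q_d (a cohomomorphism exists) but ∑_{d=1}^r χ̄_f(H_d)·d^α > ∑_{d=1}^r χ̄_f(G_d)·d^α. -/
open scoped Kronecker
open Matrix

namespace NCG

/-- The fractional clique cover number. -/
noncomputable def fracCliqueCover {V : Type} [Fintype V] [DecidableEq V]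
    (G : SimpleGraph V) : ℝ :=
  sInf {t : ℝ | ∃ w : Finset V → ℝ, (∀ C, 0 ≤ w C) ∧
    (∀ C : Finset V, ¬ G.IsClique (C : Set V) → w C = 0) ∧
    (∀ v : V, 1 ≤ ∑ C : Finset V, if v ∈ C then w C else 0) ∧
    t = ∑ C : Finset V, w C}

/-! A graph `H` represented by nonzero vectors of `ℂ^n`, with non-adjacent vertices sent to
orthogonal vectors, satisfies `H̄ ≤ Q_n` through the Kraus operators `|u_x⟩⟨x|`, `u_x` being the
normalized vector of `x`. Taking `H_1 = H`, `G_n = K_1` and all other graphs empty, an admissible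
exponent `α` would force `χ̄_f(H) ≤ n ^ α`.

Let `n = 4p` with `p` an odd prime, and represent `H` by the `2 ^ (n - 2)` sign vectors with product
`1` and first entry `1`. Inner products of distinct vectors are divisible by `4` and smaller than
`4p` in absolute value, so in a clique of `H` they do not vanish modulo `p`, whereas each vector is
orthogonal to itself modulo `p`. A rank argument over `ℤ/p` then bounds cliques by
`(1024 / 81) ^ p`, exponentially less than `2 ^ (n - 2) = 16 ^ p / 4`, and `χ̄_f(H)` is at least the
number of vertices divided by the largest clique size. -/

/-! ### Fractional clique covers -/

section FracCliqueCover

variable {V : Type} [Fintype V] [DecidableEq V] {G : SimpleGraph V}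

/-- Fractional clique covers of `G`, encoded as weights on all finite vertex sets that vanish on
the non-cliques. -/
structure IsFracCliqueCover (G : SimpleGraph V) (w : Finset V → ℝ) : Prop where
  nonneg : ∀ C, 0 ≤ w C
  eq_zero_of_not_isClique : ∀ C : Finset V, ¬ G.IsClique C → w C = 0
  one_le_sum : ∀ v, 1 ≤ ∑ C : Finset V, if v ∈ C then w C else 0

theorem fracCliqueCover_le {w : Finset V → ℝ} (hw : IsFracCliqueCover G w) :
    fracCliqueCover G ≤ ∑ C, w C := by
  refine csInf_le ⟨0, ?_⟩ ⟨w, hw.nonneg, hw.eq_zero_of_not_isClique, hw.one_le_sum, rfl⟩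
  rintro _ ⟨w', hw', -, -, rfl⟩
  exact Finset.sum_nonneg fun C _ => hw' C

theorem isFracCliqueCover_card_eq_one (G : SimpleGraph V) :
    IsFracCliqueCover G fun C => if C.card = 1 then 1 else 0 where
  nonneg C := by positivity
  eq_zero_of_not_isClique C hC := if_neg fun hcard => hC <| by
    obtain ⟨v, rfl⟩ := Finset.card_eq_one.1 hcard
    simp
  one_le_sum v := by
    have h := Finset.single_le_sum (s := Finset.univ)
      (f := fun C : Finset V => if v ∈ C then (if C.card = 1 then (1 : ℝ) else 0) else 0)
      (fun C _ => by positivity) (Finset.mem_univ {v})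
    simpa using h

theorem le_fracCliqueCover {a : ℝ} (h : ∀ w, IsFracCliqueCover G w → a ≤ ∑ C, w C) :
    a ≤ fracCliqueCover G := by
  have hG := isFracCliqueCover_card_eq_one G
  refine le_csInf ⟨_, _, hG.nonneg, hG.eq_zero_of_not_isClique, hG.one_le_sum, rfl⟩ ?_
  rintro _ ⟨w, hw, hw₀, hw₁, rfl⟩
  exact h w ⟨hw, hw₀, hw₁⟩

theorem fracCliqueCover_nonneg (G : SimpleGraph V) : 0 ≤ fracCliqueCover G :=
  le_fracCliqueCover fun _ hw => Finset.sum_nonneg fun C _ => hw.nonneg C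

theorem fracCliqueCover_le_card (G : SimpleGraph V) : fracCliqueCover G ≤ Fintype.card V := by
  refine (fracCliqueCover_le (isFracCliqueCover_card_eq_one G)).trans_eq ?_
  rw [Finset.sum_boole, ← Finset.powerset_univ, ← Finset.powersetCard_eq_filter,
    Finset.card_powersetCard, Nat.choose_one_right, Finset.card_univ]

theorem card_div_le_fracCliqueCover {c : ℕ}
    (h : ∀ C : Finset V, G.IsClique C → C.card ≤ c) :
    (Fintype.card V : ℝ) / c ≤ fracCliqueCover G := by
  refine le_fracCliqueCover fun w hw => div_le_of_le_mul₀ c.cast_nonneg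
    (Finset.sum_nonneg fun C _ => hw.nonneg C) ?_
  calc (Fintype.card V : ℝ) = ∑ _v : V, 1 := by simp
    _ ≤ ∑ v : V, ∑ C : Finset V, if v ∈ C then w C else 0 :=
      Finset.sum_le_sum fun v _ => hw.one_le_sum v
    _ = ∑ C : Finset V, C.card * w C := by
      rw [Finset.sum_comm]
      simp
    _ ≤ ∑ C : Finset V, c * w C := by
      refine Finset.sum_le_sum fun C _ => ?_
      by_cases hC : G.IsClique C
      · exact mul_le_mul_of_nonneg_right (mod_cast h C hC) (hw.nonneg C)
      · simp [hw.eq_zero_of_not_isClique C hC]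
    _ = (∑ C : Finset V, w C) * c := by rw [← Finset.mul_sum, mul_comm]

theorem fracCliqueCover_zero_le_sum_mul_rpow {r : ℕ} {W : Fin (r + 1) → Type}
    [∀ d, Fintype (W d)] [∀ d, DecidableEq (W d)] (H : ∀ d, SimpleGraph (W d)) (α : ℝ) :
    fracCliqueCover (H 0) ≤ ∑ d, fracCliqueCover (H d) * ((d.1 + 1 : ℕ) : ℝ) ^ α := by
  have h := Finset.single_le_sum (f := fun d => fracCliqueCover (H d) * ((d.1 + 1 : ℕ) : ℝ) ^ α)
    (fun d _ => mul_nonneg (fracCliqueCover_nonneg _) (by positivity)) (Finset.mem_univ 0)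
  simpa using h

end FracCliqueCover

/-! ### Cohomomorphisms -/

section Cohomomorphisms

variable {A B C : Type} [Fintype A] [DecidableEq A] [Fintype B] [DecidableEq B]
  [Fintype C] [DecidableEq C]

theorem Cohom.of_fintype {ι : Type*} [Fintype ι] {T : Submodule ℂ (Matrix B B ℂ)}
    {S : Submodule ℂ (Matrix A A ℂ)} (E : ι → Matrix A B ℂ) (hE : ∑ i, (E i)ᴴ * E i = 1)
    (hmem : ∀ i j, ∀ M ∈ S, (E i)ᴴ * M * E j ∈ T) : Cohom T S := by
  let e := (Fintype.equivFin ι).symm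
  exact ⟨Fintype.card ι, E ∘ e, (e.sum_comp fun i => (E i)ᴴ * E i).trans hE,
    fun i j => hmem (e i) (e j)⟩

theorem Cohom.trans {R : Submodule ℂ (Matrix C C ℂ)} {S : Submodule ℂ (Matrix B B ℂ)}
    {T : Submodule ℂ (Matrix A A ℂ)} (hRS : Cohom R S) (hST : Cohom S T) : Cohom R T := by
  obtain ⟨k, E, hE, hmemE⟩ := hRS
  obtain ⟨l, F, hF, hmemF⟩ := hST
  refine .of_fintype (fun p : Fin k × Fin l => F p.2 * E p.1) ?_ fun p q M hM => ?_
  · calc ∑ p : Fin k × Fin l, (F p.2 * E p.1)ᴴ * (F p.2 * E p.1)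
        = ∑ i, (E i)ᴴ * (∑ j, (F j)ᴴ * F j) * E i := by
          simp only [Fintype.sum_prod_type, Matrix.mul_sum, Matrix.sum_mul, conjTranspose_mul,
            Matrix.mul_assoc]
      _ = 1 := by simp only [hF, Matrix.mul_one, hE]
  · have h := hmemE p.1 q.1 _ (hmemF p.2 q.2 M hM)
    simpa only [conjTranspose_mul, Matrix.mul_assoc] using h

theorem Cohom.of_submatrix_mem {T : Submodule ℂ (Matrix B B ℂ)} {S : Submodule ℂ (Matrix A A ℂ)}
    {f : B → A} (hf : Function.Injective f) (hmem : ∀ M ∈ S, M.submatrix f f ∈ T) :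
    Cohom T S := by
  have hcompress (M : Matrix A A ℂ) :
      ((1 : Matrix A A ℂ).submatrix id f)ᴴ * M * (1 : Matrix A A ℂ).submatrix id f =
        M.submatrix f f := by
    ext i j
    simp [Matrix.mul_apply, one_apply]
  refine .of_fintype (fun _ : Unit => (1 : Matrix A A ℂ).submatrix id f) ?_ fun _ _ M hM => ?_
  · simpa [submatrix_one f hf] using hcompress 1
  · rw [hcompress]
    exact hmem M hM

theorem cohom_ncDirectSum {ι : Type} [Fintype ι] [DecidableEq ι] {V : ι → Type}
    [∀ i, Fintype (V i)] [∀ i, DecidableEq (V i)]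
    (S : ∀ i, Submodule ℂ (Matrix (V i) (V i) ℂ)) (i : ι) : Cohom (S i) (ncDirectSum S) :=
  .of_submatrix_mem (f := Sigma.mk i) sigma_mk_injective fun _ hM => hM.2 i

theorem ncDirectSum_cohom_of_isEmpty {ι : Type} [Fintype ι] [DecidableEq ι] {V : ι → Type}
    [∀ i, Fintype (V i)] [∀ i, DecidableEq (V i)]
    (S : ∀ i, Submodule ℂ (Matrix (V i) (V i) ℂ)) {i : ι} (h : ∀ j ≠ i, IsEmpty (V j)) :
    Cohom (ncDirectSum S) (S i) := by
  have hbij : Function.Bijective (Sigma.mk i : V i → Σ j, V j) := by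
    refine ⟨sigma_mk_injective, fun ⟨j, x⟩ => ?_⟩
    obtain rfl : j = i := of_not_not fun hj => (h j hj).false x
    exact ⟨x, rfl⟩
  let e := Equiv.ofBijective _ hbij
  refine .of_submatrix_mem e.symm.injective fun M hM => ⟨fun p q hpq => ?_, fun j => ?_⟩
  · obtain ⟨x, rfl⟩ := hbij.2 p
    obtain ⟨y, rfl⟩ := hbij.2 q
    exact absurd rfl hpq
  · obtain rfl | hj := eq_or_ne j i
    · convert hM using 1
      ext x y
      exact congrArg₂ M (e.symm_apply_apply x) (e.symm_apply_apply y)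
    · have := h j hj
      convert (S j).zero_mem using 1
      exact Matrix.ext fun x => isEmptyElim x

theorem cohom_ncTensor (S : Submodule ℂ (Matrix A A ℂ)) (T : Submodule ℂ (Matrix B B ℂ))
    (a : A) : Cohom T (ncTensor S T) := by
  refine .of_submatrix_mem (f := Prod.mk a) (Prod.mk_right_injective a) fun M hM => ?_
  induction hM using Submodule.span_induction with
  | mem _ h =>
    obtain ⟨X, -, Y, hY, rfl⟩ := h
    exact T.smul_mem (X a a) hY
  | zero => exact T.zero_mem
  | add _ _ _ _ h₁ h₂ => exact T.add_mem h₁ h₂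
  | smul c _ _ h => exact T.smul_mem c h

theorem ncTensor_cohom_of_subsingleton [Subsingleton B] (S : Submodule ℂ (Matrix A A ℂ))
    {T : Submodule ℂ (Matrix B B ℂ)} (hT : 1 ∈ T) : Cohom (ncTensor S T) S := by
  refine .of_submatrix_mem (f := Prod.fst)
    (fun p q h => Prod.ext h (Subsingleton.elim _ _)) fun M hM => ?_
  refine Submodule.subset_span ⟨M, hM, 1, hT, ?_⟩
  ext p q
  simp [one_apply, eq_iff_true_of_subsingleton]

section BigSum

variable {r : ℕ}

theorem cohom_bigSum {V : Fin r → Type} [∀ d, Fintype (V d)] [∀ d, DecidableEq (V d)]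
    (G : ∀ d, SimpleGraph (V d)) {d : Fin r} (v : V d) : Cohom (qGraph (d + 1)) (bigSum G) :=
  (cohom_ncTensor _ _ v).trans (cohom_ncDirectSum _ d)

theorem bigSum_cohom_of_isEmpty {V : Fin (r + 1) → Type} [∀ d, Fintype (V d)]
    [∀ d, DecidableEq (V d)] (G : ∀ d, SimpleGraph (V d)) (h : ∀ d ≠ 0, IsEmpty (V d)) :
    Cohom (bigSum G) (graphNC (G 0)) := by
  have : Subsingleton (Fin ((0 : Fin (r + 1)).1 + 1)) := inferInstanceAs (Subsingleton (Fin 1))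
  refine (ncDirectSum_cohom_of_isEmpty _ fun d hd => ?_).trans
    (ncTensor_cohom_of_subsingleton _ (Submodule.mem_span_singleton_self 1))
  have := h d hd
  infer_instance

end BigSum

end Cohomomorphisms

/-! ### Orthogonal representations -/

section Nonorthogonality

/-- The graph of a family of vectors in which distinct vertices are adjacent when their vectors
are not orthogonal. -/
def nonorthogonalityGraph {V E : Type*} [NormedAddCommGroup E] [InnerProductSpace ℂ E]
    (u : V → E) : SimpleGraph V where
  Adj x y := x ≠ y ∧ inner ℂ (u x) (u y) ≠ 0
  symm := ⟨fun _ _ h => ⟨h.1.symm, inner_eq_zero_symm.not.1 h.2⟩⟩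
  loopless := ⟨fun _ h => h.1 rfl⟩

theorem conjTranspose_vecMulVec_single_mul_mul {R A B : Type*} [CommSemiring R] [StarRing R]
    [Fintype A] [DecidableEq B] (a b : A → R) (x y : B) (M : Matrix A A R) :
    (vecMulVec a (Pi.single x 1))ᴴ * M * vecMulVec b (Pi.single y 1) =
      (star a ⬝ᵥ M *ᵥ b) • Matrix.single x y 1 := by
  rw [conjTranspose_vecMulVec, Matrix.mul_assoc, mul_vecMulVec, vecMulVec_mul_vecMulVec,
    vecMulVec_smul, Pi.star_single, star_one, single_eq_single_vecMulVec_single]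

variable {V : Type} [Fintype V] [DecidableEq V] {n : ℕ}

theorem graphNC_nonorthogonalityGraph_cohom {u : V → EuclideanSpace ℂ (Fin n)}
    (hu : ∀ x, u x ≠ 0) : Cohom (graphNC (nonorthogonalityGraph u)) (qGraph n) := by
  let a (x : V) : EuclideanSpace ℂ (Fin n) := ((‖u x‖⁻¹ : ℝ) : ℂ) • u x
  have hself (x : V) : star (a x).ofLp ⬝ᵥ (a x).ofLp = 1 := by
    rw [dotProduct_comm, ← EuclideanSpace.inner_eq_star_dotProduct, inner_self_eq_norm_sq_to_K]
    simp [a, norm_smul, hu x]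
  refine .of_fintype (fun x => vecMulVec (a x).ofLp (Pi.single x 1)) ?_ fun x y M hM => ?_
  · calc ∑ x, (vecMulVec (a x).ofLp (Pi.single x 1))ᴴ * vecMulVec (a x).ofLp (Pi.single x 1)
        = ∑ x, Matrix.single x x (1 : ℂ) := by
          refine Finset.sum_congr rfl fun x _ => ?_
          have h := conjTranspose_vecMulVec_single_mul_mul (a x).ofLp (a x).ofLp x x 1
          rwa [Matrix.mul_one, one_mulVec, hself, one_smul] at h
      _ = 1 := Matrix.sum_single_one
  · obtain ⟨c, rfl⟩ := Submodule.mem_span_singleton.1 hM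
    rw [conjTranspose_vecMulVec_single_mul_mul]
    by_cases hxy : (nonorthogonalityGraph u).Adj x y ∨ x = y
    · exact Submodule.smul_mem _ _ (Submodule.subset_span ⟨x, y, hxy, rfl⟩)
    · have horth : inner ℂ (u x) (u y) = 0 := by
        simp only [nonorthogonalityGraph] at hxy
        tauto
      have hdot : star (a x).ofLp ⬝ᵥ (a y).ofLp = 0 := by
        rw [dotProduct_comm, ← EuclideanSpace.inner_eq_star_dotProduct]
        simp [a, inner_smul_left, inner_smul_right, horth]
      rw [smul_mulVec, one_mulVec, dotProduct_smul, hdot, smul_zero, zero_smul]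
      exact Submodule.zero_mem _

end Nonorthogonality

/-! ### Self-orthogonal vectors over finite fields -/

theorem dotProduct_pow {R ι : Type*} [CommSemiring R] [Fintype ι] [DecidableEq ι]
    (a b : ι → R) (m : ℕ) :
    (a ⬝ᵥ b) ^ m = ∑ k : Sym ι m,
      (k.1.countPerms * (k.1.map a).prod) * (k.1.map b).prod := by
  simp only [dotProduct, Finset.sum_pow, Finset.sym_univ, Multiset.prod_map_mul, mul_assoc]

theorem card_le_of_dotProduct_self_eq_zero {F V ι : Type*} [Field F] [Fintype F] [Fintype V]
    [Fintype ι] (u : V → ι → F) (hself : ∀ x, u x ⬝ᵥ u x = 0)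
    (hne : Pairwise fun x y => u x ⬝ᵥ u y ≠ 0) :
    Fintype.card V ≤ (Fintype.card ι).multichoose (Fintype.card F - 1) + 1 := by
  classical
  set m := Fintype.card F - 1
  let J₁ : Matrix V Unit F := of fun _ _ => 1
  let J₂ : Matrix Unit V F := of fun _ _ => 1
  let A : Matrix V (Sym ι m) F := of fun x k => k.1.countPerms * (k.1.map (u x)).prod
  let B : Matrix (Sym ι m) V F := of fun k y => (k.1.map (u y)).prod
  -- By Fermat, `1 - (u x ⬝ᵥ u y) ^ m` is the identity matrix; expanding the power bounds its rank.
  have hm : m ≠ 0 := Nat.sub_ne_zero_of_lt Fintype.one_lt_card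
  have hfactor : fromCols J₁ (-A) * fromRows J₂ B = 1 := by
    ext x y
    have hentry : (fromCols J₁ (-A) * fromRows J₂ B) x y = 1 - (u x ⬝ᵥ u y) ^ m := by
      simp [Matrix.mul_apply, J₁, J₂, A, B, dotProduct_pow, sub_eq_add_neg]
    rw [hentry]
    obtain rfl | hxy := eq_or_ne x y
    · rw [hself, zero_pow hm, sub_zero, one_apply_eq]
    · rw [FiniteField.pow_card_sub_one_eq_one _ (hne hxy), sub_self, one_apply_ne hxy]
  calc Fintype.card V = (fromCols J₁ (-A) * fromRows J₂ B).rank := by rw [hfactor, rank_one]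
    _ ≤ (fromCols J₁ (-A)).rank := rank_mul_le_left _ _
    _ ≤ Fintype.card (Unit ⊕ Sym ι m) := rank_le_card_width _
    _ = (Fintype.card ι).multichoose m + 1 := by
      rw [Fintype.card_sum, Fintype.card_unit, Sym.card_sym_eq_multichoose, add_comm]

/-! ### Sign vectors -/

section Signs

variable {κ : Type*}

theorem sum_units_modEq_four (s : Finset κ) (z : κ → ℤˣ) :
    ∑ i ∈ s, (z i : ℤ) ≡ s.card - 1 + (∏ i ∈ s, z i : ℤˣ) [ZMOD 4] := by
  classical
  induction s using Finset.induction_on with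
  | empty => simp [Int.ModEq.refl]
  | insert a s ha ih =>
    have hmul (ε δ : ℤˣ) : (ε : ℤ) + δ ≡ 1 + (ε * δ : ℤˣ) [ZMOD 4] := by
      revert ε δ; decide
    rw [Finset.sum_insert ha, Finset.prod_insert ha, Finset.card_insert_of_notMem ha]
    calc (z a : ℤ) + ∑ i ∈ s, (z i : ℤ)
        ≡ z a + (s.card - 1 + (∏ i ∈ s, z i : ℤˣ)) [ZMOD 4] := ih.add_left _
      _ = s.card - 1 + (z a + (∏ i ∈ s, z i : ℤˣ)) := by ring
      _ ≡ s.card - 1 + (1 + (z a * ∏ i ∈ s, z i : ℤˣ)) [ZMOD 4] := (hmul _ _).add_left _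
      _ = (s.card + 1 : ℕ) - 1 + (z a * ∏ i ∈ s, z i : ℤˣ) := by push_cast; ring

/-- A tuple of signs as a vector of `ℂ^κ`. -/
def signVector (s : κ → ℤˣ) : EuclideanSpace ℂ κ := WithLp.toLp 2 fun i => ((s i : ℤ) : ℂ)

theorem signVector_ne_zero [Nonempty κ] (s : κ → ℤˣ) : signVector s ≠ 0 := fun h => by
  obtain ⟨i⟩ := ‹Nonempty κ›
  simpa [signVector] using congrFun (congrArg WithLp.ofLp h) i

variable [Fintype κ]

theorem sum_units_lt_card {z : κ → ℤˣ} (hz : z ≠ 1) : ∑ i, (z i : ℤ) < Fintype.card κ := by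
  have hle (ε : ℤˣ) : (ε : ℤ) ≤ 1 := by revert ε; decide
  obtain ⟨j, hj⟩ := Function.ne_iff.1 hz
  have hlt : (z j : ℤ) < 1 := (hle _).lt_of_ne (Units.val_eq_one.not.2 hj)
  simpa using Finset.sum_lt_sum (fun i _ => hle (z i)) ⟨j, Finset.mem_univ j, hlt⟩

theorem abs_sum_units_lt_card {z : κ → ℤˣ} (h₁ : z ≠ 1) (h₂ : z ≠ -1) :
    |∑ i, (z i : ℤ)| < Fintype.card κ := by
  have hneg : ∑ i, ((-z) i : ℤ) < Fintype.card κ := sum_units_lt_card (mt neg_eq_iff_eq_neg.1 h₂)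
  refine abs_lt.2 ⟨?_, sum_units_lt_card h₁⟩
  simpa [neg_lt] using hneg

theorem sum_units_eq_zero_of_dvd {p : ℕ} (hp : Odd p) (hcard : Fintype.card κ = 4 * p)
    {z : κ → ℤˣ} (hprod : ∏ i, z i = 1) (h₁ : z ≠ 1) (h₂ : z ≠ -1)
    (hdvd : (p : ℤ) ∣ ∑ i, (z i : ℤ)) : ∑ i, (z i : ℤ) = 0 := by
  have hfour : (4 : ℤ) ∣ ∑ i, (z i : ℤ) := by
    have hmod := sum_units_modEq_four Finset.univ z
    rw [hprod, Finset.card_univ, hcard] at hmod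
    exact Int.modEq_zero_iff_dvd.1 (hmod.trans (Int.modEq_zero_iff_dvd.2 ⟨p, by simp⟩))
  have hcoprime : IsCoprime (4 : ℤ) p :=
    mod_cast (Nat.Coprime.pow_left 2 (Nat.coprime_two_left.2 hp) : Nat.Coprime (2 ^ 2) p).isCoprime
  refine Int.eq_zero_of_abs_lt_dvd (hcoprime.mul_dvd hfour hdvd) ?_
  simpa [hcard] using abs_sum_units_lt_card h₁ h₂

/-- The completion of a sign tuple to one with product `1` and first entry `1`. The fixed product
makes all inner products divisible by `4`; the fixed entry excludes antipodal pairs. -/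
def evenSigns {n : ℕ} (x : Fin n → ℤˣ) : Fin (n + 2) → ℤˣ :=
  Fin.cons 1 (Fin.cons (∏ i, x i) x)

theorem evenSigns_injective {n : ℕ} :
    Function.Injective (evenSigns : (Fin n → ℤˣ) → Fin (n + 2) → ℤˣ) := fun _ _ h =>
  (Fin.cons_injective2 (Fin.cons_injective2 h).2).2

theorem evenSigns_ne_neg {n : ℕ} (x y : Fin n → ℤˣ) : evenSigns x ≠ -evenSigns y := fun h =>
  absurd (congrFun h 0) (by simp [evenSigns])

theorem prod_evenSigns {n : ℕ} (x : Fin n → ℤˣ) : ∏ i, evenSigns x i = 1 := by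
  simp [evenSigns, Fin.prod_univ_succ, Int.units_mul_self]

theorem inner_signVector (s t : κ → ℤˣ) :
    inner ℂ (signVector s) (signVector t) = (∑ i, ((s * t) i : ℤ) : ℤ) := by
  simp [signVector, PiLp.inner_apply, mul_comm]

theorem card_le_of_isClique_signVector {p : ℕ} (hp : p.Prime) (hp₂ : p ≠ 2)
    (hκ : Fintype.card κ = 4 * p) {V : Type*} {s : V → κ → ℤˣ} (hprod : ∀ x, ∏ i, s x i = 1)
    (hinj : Function.Injective s) (hneg : ∀ x y, s x ≠ -s y) {C : Finset V}
    (hC : (nonorthogonalityGraph (signVector ∘ s)).IsClique C) :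
    C.card ≤ (4 * p).multichoose (p - 1) + 1 := by
  have : Fact p.Prime := ⟨hp⟩
  let u (x : C) (i : κ) : ZMod p := ((s x i : ℤ) : ZMod p)
  have hdot (x y : C) : u x ⬝ᵥ u y = (∑ i, ((s x * s y) i : ℤ) : ℤ) := by
    simp [u, dotProduct]
  have hself (x : C) : u x ⬝ᵥ u x = 0 := by
    simp [hdot, hκ, Int.units_mul_self]
  have hne : Pairwise fun x y => u x ⬝ᵥ u y ≠ 0 := by
    intro x y hxy hzero
    rw [hdot, ZMod.intCast_zmod_eq_zero_iff_dvd] at hzero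
    have hprod_mul : ∏ i, (s x * s y) i = 1 := by
      simp [Finset.prod_mul_distrib, hprod]
    have hcancel {c : κ → ℤˣ} (h : s x * s y = c) : s x = c * s y := by
      rw [← h, mul_assoc, show s y * s y = 1 from funext fun i => Int.units_mul_self _, mul_one]
    have hne_one : s x * s y ≠ 1 := fun h =>
      hxy (Subtype.ext (hinj ((hcancel h).trans (one_mul _))))
    have hne_neg_one : s x * s y ≠ -1 := fun h =>
      hneg x y ((hcancel h).trans (neg_one_mul _))
    refine (hC x.2 y.2 (Subtype.coe_ne_coe.2 hxy)).2 ?_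
    rw [Function.comp_apply, Function.comp_apply, inner_signVector,
      sum_units_eq_zero_of_dvd (hp.odd_of_ne_two hp₂) hκ hprod_mul hne_one hne_neg_one hzero,
      Int.cast_zero]
  simpa [hκ, ZMod.card] using card_le_of_dotProduct_self_eq_zero u hself hne

end Signs

/-! ### Growth -/

section Growth
open Filter

theorem choose_mul_pow_mul_pow_le {R : Type*} [CommSemiring R] [PartialOrder R] [IsOrderedRing R]
    (n k : ℕ) {a b : R} (ha : 0 ≤ a) (hb : 0 ≤ b) :
    n.choose k * (a ^ k * b ^ (n - k)) ≤ (a + b) ^ n := by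
  obtain hk | hk := le_or_gt k n
  · rw [add_pow, mul_comm]
    exact Finset.single_le_sum (f := fun m => a ^ m * b ^ (n - m) * n.choose m)
      (fun _ _ => by positivity) (Finset.mem_range_succ_iff.2 hk)
  · rw [Nat.choose_eq_zero_of_lt hk, Nat.cast_zero, zero_mul]
    positivity

theorem multichoose_add_one_le_multichoose_succ {n : ℕ} (hn : 2 ≤ n) (k : ℕ) :
    n.multichoose k + 1 ≤ n.multichoose (k + 1) := by
  obtain ⟨l, rfl⟩ : ∃ l, n = l + 1 + 1 := ⟨n - 2, by omega⟩
  have hpos : 0 < (l + 1).multichoose (k + 1) := by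
    rw [Nat.multichoose_eq]
    exact Nat.choose_pos (by omega)
  rw [Nat.multichoose_succ_succ]
  omega

theorem multichoose_four_mul_add_one_le_pow {p : ℕ} (hp : 0 < p) :
    (((4 * p).multichoose (p - 1) + 1 : ℕ) : ℝ) ≤ (1024 / 81) ^ p := by
  have hchoose : (4 * p).multichoose (p - 1) + 1 ≤ (5 * p).choose p := by
    have h := multichoose_add_one_le_multichoose_succ (show 2 ≤ 4 * p by omega) (p - 1)
    rw [Nat.sub_add_cancel hp, Nat.multichoose_eq (4 * p) p] at h
    exact h.trans (Nat.choose_le_choose p (by omega))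
  -- One term of the expansion of `(1 + 3) ^ (5 * p)`: whence `1024 / 81 = 4 ^ 5 / 3 ^ 4`.
  have hbinom : ((5 * p).choose p : ℝ) * 81 ^ p ≤ 1024 ^ p := by
    have h := choose_mul_pow_mul_pow_le (5 * p) p (zero_le_one' ℝ) zero_le_three
    rw [show 5 * p - p = 4 * p by omega, pow_mul, pow_mul] at h
    norm_num at h
    exact h
  rw [div_pow, le_div_iff₀ (by positivity)]
  refine le_trans ?_ hbinom
  gcongr

theorem eventually_mul_rpow_mul_pow_lt_pow (C α : ℝ) {a b : ℝ} (ha : 0 < a) (hab : a < b) :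
    ∀ᶠ n : ℕ in atTop, C * (n : ℝ) ^ α * a ^ n < b ^ n := by
  have hexp {c : ℝ} (hc : 0 < c) (n : ℕ) : Real.exp (Real.log c * n) = c ^ n := by
    rw [mul_comm, Real.exp_nat_mul, Real.exp_log hc]
  have ho := (isLittleO_exp_mul_rpow_of_lt α (Real.log_lt_log ha hab)).const_mul_left C
    |>.comp_tendsto tendsto_natCast_atTop_atTop
  filter_upwards [ho.bound one_half_pos] with n hn
  have hb : 0 < b ^ n := pow_pos (ha.trans hab) n
  simp only [Function.comp_apply, hexp ha, hexp (ha.trans hab), Real.norm_eq_abs,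
    abs_of_pos hb] at hn
  calc C * (n : ℝ) ^ α * a ^ n = C * (a ^ n * (n : ℝ) ^ α) := by ring
    _ ≤ 1 / 2 * b ^ n := (le_abs_self _).trans hn
    _ < b ^ n := by linarith

theorem exists_prime_rpow_mul_multichoose_lt (α : ℝ) : ∃ p : ℕ, p.Prime ∧ p ≠ 2 ∧
    ((4 * p : ℕ) : ℝ) ^ α * ((4 * p).multichoose (p - 1) + 1 : ℕ) < 2 ^ (4 * p - 2) := by
  have hprimes : ∃ᶠ p : ℕ in atTop, p.Prime :=
    Nat.frequently_atTop_iff_infinite.2 Nat.infinite_setOfPred_prime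
  have hgrowth := eventually_mul_rpow_mul_pow_lt_pow (4 * 4 ^ α) α
    (show (0 : ℝ) < 1024 / 81 by norm_num) (show (1024 / 81 : ℝ) < 16 by norm_num)
  obtain ⟨p, hp, hlt, hp2⟩ := (hprimes.and_eventually (hgrowth.and (eventually_gt_atTop 2))).exists
  refine ⟨p, hp, hp2.ne', ?_⟩
  have hpow : (4 : ℝ) * 2 ^ (4 * p - 2) = 16 ^ p := by
    rw [show (4 : ℝ) = 2 ^ 2 by norm_num, ← pow_add, show 2 + (4 * p - 2) = 4 * p by omega, pow_mul]
    norm_num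
  have hrpow : ((4 * p : ℕ) : ℝ) ^ α = 4 ^ α * (p : ℝ) ^ α := by
    rw [Nat.cast_mul, Nat.cast_ofNat, Real.mul_rpow (by positivity) (by positivity)]
  calc ((4 * p : ℕ) : ℝ) ^ α * ((4 * p).multichoose (p - 1) + 1 : ℕ)
      ≤ 4 ^ α * (p : ℝ) ^ α * (1024 / 81) ^ p := by
        rw [hrpow]
        gcongr
        exact multichoose_four_mul_add_one_le_pow hp.pos
    _ < 2 ^ (4 * p - 2) := by linarith

end Growth

theorem exists_rpow_lt_fracCliqueCover_nonorthogonalityGraph (α : ℝ) :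
    ∃ (n K : ℕ) (u : Fin K → EuclideanSpace ℂ (Fin (n + 1))), (∀ x, u x ≠ 0) ∧
      ((n + 1 : ℕ) : ℝ) ^ α < fracCliqueCover (nonorthogonalityGraph u) := by
  obtain ⟨p, hp, hp₂, hlt⟩ := exists_prime_rpow_mul_multichoose_lt α
  obtain ⟨N, hN⟩ : ∃ N, N + 2 = 4 * p := ⟨4 * p - 2, by have := hp.two_le; omega⟩
  let e : Fin (2 ^ N) ≃ (Fin N → ℤˣ) := (Fintype.equivFinOfCardEq (by simp)).symm
  refine ⟨N + 1, 2 ^ N, signVector ∘ (evenSigns ∘ e), fun x => signVector_ne_zero _, ?_⟩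
  have hclique (C : Finset (Fin (2 ^ N))) :
      (nonorthogonalityGraph (signVector ∘ (evenSigns ∘ e))).IsClique C →
        C.card ≤ (4 * p).multichoose (p - 1) + 1 :=
    card_le_of_isClique_signVector hp hp₂ (by rw [Fintype.card_fin, hN])
      (fun x => prod_evenSigns (e x)) (evenSigns_injective.comp e.injective)
      fun x y => evenSigns_ne_neg (e x) (e y)
  refine lt_of_lt_of_le ?_ (card_div_le_fracCliqueCover hclique)
  rw [lt_div_iff₀ (by positivity), Fintype.card_fin, Nat.cast_pow, Nat.cast_ofNat]
  rw [← hN, Nat.add_sub_cancel] at hlt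
  rwa [← hN]

theorem fracCliqueCover_no_admissible_exponent (α : ℝ) :
    ∃ (r : ℕ) (m k : Fin r → ℕ)
      (G : ∀ d, SimpleGraph (Fin (m d))) (H : ∀ d, SimpleGraph (Fin (k d))),
      Cohom (bigSum H) (bigSum G) ∧
      ∑ d : Fin r, fracCliqueCover (G d) * ((d.1 + 1 : ℕ) : ℝ) ^ α <
        ∑ d : Fin r, fracCliqueCover (H d) * ((d.1 + 1 : ℕ) : ℝ) ^ α := by
  obtain ⟨n, K, u, hu, hlt⟩ := exists_rpow_lt_fracCliqueCover_nonorthogonalityGraph α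
  let m : Fin (n + 1) → ℕ := Pi.single (Fin.last n) 1
  let k : Fin (n + 1) → ℕ := Fin.cons K 0
  let H : ∀ d, SimpleGraph (Fin (k d)) := Fin.cons (nonorthogonalityGraph u) fun _ => ⊥
  refine ⟨n + 1, m, k, fun _ => ⊥, H, ?_, ?_⟩
  · have hH : Cohom (bigSum H) (graphNC (nonorthogonalityGraph u)) :=
      bigSum_cohom_of_isEmpty H (Fin.cases (absurd rfl) fun d _ => Fin.isEmpty)
    have hG : Cohom (qGraph (n + 1)) (bigSum fun d => (⊥ : SimpleGraph (Fin (m d)))) :=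
      cohom_bigSum _ (d := Fin.last n) ⟨0, by simp [m]⟩
    exact (hH.trans (graphNC_nonorthogonalityGraph_cohom hu)).trans hG
  · calc ∑ d, fracCliqueCover (⊥ : SimpleGraph (Fin (m d))) * ((d.1 + 1 : ℕ) : ℝ) ^ α
        ≤ ∑ d, m d * ((d.1 + 1 : ℕ) : ℝ) ^ α := by
          gcongr with d
          simpa using fracCliqueCover_le_card (⊥ : SimpleGraph (Fin (m d)))
      _ = ((n + 1 : ℕ) : ℝ) ^ α := by simp [m, Pi.single_apply]
      _ < fracCliqueCover (nonorthogonalityGraph u) := hlt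
      _ ≤ ∑ d, fracCliqueCover (H d) * ((d.1 + 1 : ℕ) : ℝ) ^ α :=
          fracCliqueCover_zero_le_sum_mul_rpow H α

end NCG
end

section
/- Let G_1, …, G_r and H_1, …, H_r be finite simple graphs, S = ⊕_{d=1}^r Ḡ_d ⊗ Q_d, and T = ⊕_{d=1}^r H̄_d ⊗ Q_d. Then the following are equivalent: (1) T ≤ S; (2) there exist a function φ : ⊔_{d=1}^r V(H_d) → ⊔_{d=1}^r V(G_d) and isometries U_h : ℂ^{π(h)} → ℂ^{π(φ(h))} (meaning U_h*U_h = I_{π(h)}) for each h ∈ ⊔_{d=1}^r V(H_d), such that (a) whenever ¬(h ≃ h'), either ¬(φ(h) ≃ φ(h')) or U_h*U_{h'} = 0, and (b) whenever h ≃ h' and φ(h) ≃ φ(h'), there is c ∈ ℂ with U_h*U_{h'} = c·I_{π(h)}. -/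
open scoped Kronecker
open Matrix

namespace NCG

/-- For vertices of a disjoint family of graphs: `g ≃ g'` iff they lie in the same member
graph and are adjacent or equal there. -/
def SimRel {r : ℕ} {V : Fin r → Type} (G : ∀ d, SimpleGraph (V d)) :
    (Σ d, V d) → (Σ d, V d) → Prop :=
  fun p q => ∃ e : p.1 = q.1,
    (G q.1).Adj (cast (congrArg V e) p.2) q.2 ∨ cast (congrArg V e) p.2 = q.2

/-! A cohomomorphism acts block by block: `Eᴴ * S * F ⊆ T` passes to the blocks of `E` and `F` with
respect to block decompositions of the spaces on which `S` and `T` act. If the diagonal blocks of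
`T` are scalar, the Gram matrix of every block of a Kraus operator `E i` is therefore scalar, so
each nonzero block is a multiple of an isometry. Since `∑ i, (E i)ᴴ * E i = 1`, every column `h`
contains a nonzero block, whose row is `φ h` and whose rescaling is `U h`; conversely the `U h`,
placed in the blocks `(φ h, h)`, form a cohomomorphism. For `⊕ Ḡ_d ⊗ Q_d`, with one block for each
vertex, the `(g, g')` block is `ℂ·I` if `g ≃ g'` and `0` otherwise. -/

lemma exists_smul_conjTranspose_mul_self_eq_one {𝕜 m n : Type*} [RCLike 𝕜] [Fintype m]
    [DecidableEq n] {A : Matrix m n 𝕜} {c : 𝕜} (hA : Aᴴ * A = c • 1) (hA₀ : A ≠ 0) :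
    ∃ s : 𝕜, (s • A)ᴴ * (s • A) = 1 := by
  open scoped ComplexOrder in
  obtain ⟨j, -⟩ : ∃ j, Aᵀ j ≠ 0 := Function.ne_iff.1 (transpose_eq_zero.not.2 hA₀)
  have c_nonneg : 0 ≤ c := by
    have gram_diag : (Aᴴ * A) j j = c := by
      rw [hA, Matrix.smul_apply, one_apply_eq, smul_eq_mul, mul_one]
    rw [← gram_diag]
    exact dotProduct_star_self_nonneg (Aᵀ j)
  obtain ⟨x, hx, rfl⟩ := RCLike.nonneg_iff_exists_ofReal.1 c_nonneg
  have x_pos : 0 < x := hx.lt_of_ne' fun hx₀ => hA₀ <| by simpa [hx₀] using hA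
  refine ⟨((√x)⁻¹ : ℝ), ?_⟩
  have normalization : (((√x)⁻¹ : ℝ) : 𝕜) * ((√x)⁻¹ : ℝ) * x = 1 := by
    rw [← RCLike.ofReal_mul, ← RCLike.ofReal_mul, ← mul_inv, Real.mul_self_sqrt hx,
      inv_mul_cancel₀ x_pos.ne', RCLike.ofReal_one]
  rw [conjTranspose_smul, Matrix.smul_mul, Matrix.mul_smul, hA, smul_smul, smul_smul,
    RCLike.star_def, RCLike.conj_ofReal, normalization, one_smul]

lemma exists_conjTranspose_mul_mul_ne_zero {R A B P k n : Type*} {α : P → Type*} [Semiring R]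
    [StarRing R] [Nontrivial R] [Fintype A] [DecidableEq A] [Fintype B] [DecidableEq B] [Fintype P]
    [∀ g, Fintype (α g)] [Fintype k] [DecidableEq n] [Nonempty n] {I : ∀ g, Matrix A (α g) R}
    (hI : ∑ g, I g * (I g)ᴴ = 1) {E : k → Matrix A B R} (hE : ∑ i, (E i)ᴴ * E i = 1)
    {X : Matrix B n R} (hX : Xᴴ * X = 1) : ∃ g i, (I g)ᴴ * E i * X ≠ 0 := by
  by_contra! blocks_eq_zero
  have column_eq_zero (i : k) : E i * X = 0 := calc
    E i * X = (∑ g, I g * (I g)ᴴ) * (E i * X) := by rw [hI, Matrix.one_mul]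
    _ = ∑ g, I g * ((I g)ᴴ * E i * X) := by simp only [Matrix.sum_mul, Matrix.mul_assoc]
    _ = 0 := by simp only [blocks_eq_zero, Matrix.mul_zero, Finset.sum_const_zero]
  have one_eq_zero : (1 : Matrix n n R) = 0 := calc
    1 = Xᴴ * (∑ i, (E i)ᴴ * E i) * X := by rw [hE, Matrix.mul_one, hX]
    _ = ∑ i, Xᴴ * (E i)ᴴ * (E i * X) := by
      simp only [Matrix.mul_sum, Matrix.sum_mul, Matrix.mul_assoc]
    _ = 0 := by simp only [column_eq_zero, Matrix.mul_zero, Finset.sum_const_zero]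
  have j := Classical.arbitrary n
  exact one_ne_zero (α := R) (by simpa using congr_fun₂ one_eq_zero j j)

section Cohomomorphisms

variable {A B : Type} [Fintype A] [DecidableEq A] [Fintype B] [DecidableEq B]
  {S : Submodule ℂ (Matrix A A ℂ)} {T : Submodule ℂ (Matrix B B ℂ)}

lemma cohom_of_fintype {ι : Type*} [Fintype ι] (E : ι → Matrix A B ℂ)
    (hE : ∑ i, (E i)ᴴ * E i = 1) (hST : ∀ i j, ∀ M ∈ S, (E i)ᴴ * M * E j ∈ T) : Cohom T S := by
  let e := (Fintype.equivFin ι).symm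
  exact ⟨_, E ∘ e, (e.sum_comp fun i => (E i)ᴴ * E i).trans hE, fun i j => hST (e i) (e j)⟩

end Cohomomorphisms

section BlockDecompositions

variable {A m n : Type*} [Fintype m] [Fintype n]

/-- The operators `K` between two subspaces, given by their inclusions `X` and `Y`, whose extension
by zero `X * K * Yᴴ` lies in `S`. -/
def blockSpace (S : Submodule ℂ (Matrix A A ℂ)) (X : Matrix A m ℂ) (Y : Matrix A n ℂ) :
    Submodule ℂ (Matrix m n ℂ) :=
  S.comap (mulRightLinearMap A ℂ Yᴴ ∘ₗ mulLeftLinearMap n ℂ X)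

lemma mem_blockSpace {S : Submodule ℂ (Matrix A A ℂ)} {X : Matrix A m ℂ} {Y : Matrix A n ℂ}
    {K : Matrix m n ℂ} : K ∈ blockSpace S X Y ↔ X * K * Yᴴ ∈ S :=
  Iff.rfl

/-- An orthogonal decomposition of `ℂ^A` into subspaces with inclusions `J g`, such that `S`
contains the `(g, g')` block of each of its elements. -/
structure IsBlockDecomposition [Fintype A] [DecidableEq A] {P : Type*} [Fintype P] {α : P → Type*}
    [∀ g, Fintype (α g)] [∀ g, DecidableEq (α g)] (S : Submodule ℂ (Matrix A A ℂ))
    (J : ∀ g, Matrix A (α g) ℂ) : Prop where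
  conjTranspose_mul_self (g : P) : (J g)ᴴ * J g = 1
  sum_mul_conjTranspose : ∑ g, J g * (J g)ᴴ = 1
  conj_mem_blockSpace {M : Matrix A A ℂ} (hM : M ∈ S) (g g' : P) :
    (J g)ᴴ * M * J g' ∈ blockSpace S (J g) (J g')

lemma IsBlockDecomposition.block_conj_mem_blockSpace {A B Q m m' : Type*} [Fintype A] [Fintype B]
    [DecidableEq B] [Fintype Q] [Fintype m] [Fintype m'] {β : Q → Type*} [∀ h, Fintype (β h)]
    [∀ h, DecidableEq (β h)] {S : Submodule ℂ (Matrix A A ℂ)} {T : Submodule ℂ (Matrix B B ℂ)}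
    {J : ∀ h, Matrix B (β h) ℂ} (hT : IsBlockDecomposition T J) {E F : Matrix A B ℂ}
    (hEF : ∀ M ∈ S, Eᴴ * M * F ∈ T) {X : Matrix A m ℂ} {Y : Matrix A m' ℂ} {K : Matrix m m' ℂ}
    (hK : K ∈ blockSpace S X Y) (h h' : Q) :
    (Xᴴ * E * J h)ᴴ * K * (Yᴴ * F * J h') ∈ blockSpace T (J h) (J h') := by
  have regroup : (Xᴴ * E * J h)ᴴ * K * (Yᴴ * F * J h') =
      (J h)ᴴ * (Eᴴ * (X * K * Yᴴ) * F) * J h' := by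
    simp only [conjTranspose_mul, conjTranspose_conjTranspose, Matrix.mul_assoc]
  rw [regroup]
  exact hT.conj_mem_blockSpace (hEF _ (mem_blockSpace.1 hK)) h h'

end BlockDecompositions

section Characterization

variable {A B : Type} [Fintype A] [DecidableEq A] [Fintype B] [DecidableEq B]
  {S : Submodule ℂ (Matrix A A ℂ)} {T : Submodule ℂ (Matrix B B ℂ)}
  {P Q : Type*} [Fintype P] [Fintype Q] {α : P → Type*} {β : Q → Type*}
  [∀ g, Fintype (α g)] [∀ g, DecidableEq (α g)] [∀ h, Fintype (β h)] [∀ h, DecidableEq (β h)]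
  {I : ∀ g, Matrix A (α g) ℂ} {J : ∀ h, Matrix B (β h) ℂ}

lemma IsBlockDecomposition.one_mem_blockSpace (hS : IsBlockDecomposition S I) (hS₁ : 1 ∈ S)
    (g : P) : 1 ∈ blockSpace S (I g) (I g) := by
  simpa only [Matrix.mul_one, hS.conjTranspose_mul_self] using hS.conj_mem_blockSpace hS₁ g g

lemma Cohom.exists_block_isometries (hTS : Cohom T S) (hS : IsBlockDecomposition S I)
    (hT : IsBlockDecomposition T J) [∀ h, Nonempty (β h)] (hS₁ : 1 ∈ S)
    (diag_le : ∀ h, blockSpace T (J h) (J h) ≤ Submodule.span ℂ {1}) :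
    ∃ (φ : Q → P) (U : ∀ h, Matrix (α (φ h)) (β h) ℂ), (∀ h, (U h)ᴴ * U h = 1) ∧
      ∀ h h', ∀ K ∈ blockSpace S (I (φ h)) (I (φ h')),
        (U h)ᴴ * K * U h' ∈ blockSpace T (J h) (J h') := by
  obtain ⟨k, E, hE, hES⟩ := hTS
  choose φ i block_ne_zero using fun h =>
    exists_conjTranspose_mul_mul_ne_zero hS.sum_mul_conjTranspose hE (hT.conjTranspose_mul_self h)
  have block_conj_mem {h h' : Q} {K} (hK : K ∈ blockSpace S (I (φ h)) (I (φ h'))) :=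
    hT.block_conj_mem_blockSpace (hES (i h) (i h')) hK h h'
  have exists_rescaling (h : Q) :
      ∃ s : ℂ, (s • ((I (φ h))ᴴ * E (i h) * J h))ᴴ * (s • ((I (φ h))ᴴ * E (i h) * J h)) = 1 := by
    have gram_mem := diag_le h (block_conj_mem (hS.one_mem_blockSpace hS₁ (φ h)))
    rw [Matrix.mul_one] at gram_mem
    obtain ⟨c, hc⟩ := Submodule.mem_span_singleton.1 gram_mem
    exact exists_smul_conjTranspose_mul_self_eq_one hc.symm (block_ne_zero h)
  choose s hs using exists_rescaling
  refine ⟨φ, fun h => s h • ((I (φ h))ᴴ * E (i h) * J h), hs, fun h h' K hK => ?_⟩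
  simp only [conjTranspose_smul, Matrix.smul_mul, Matrix.mul_smul]
  exact Submodule.smul_mem _ _ (Submodule.smul_mem _ _ (block_conj_mem hK))

lemma cohom_of_block_isometries (hS : IsBlockDecomposition S I) (hT : IsBlockDecomposition T J)
    (φ : Q → P) (U : ∀ h, Matrix (α (φ h)) (β h) ℂ) (hU : ∀ h, (U h)ᴴ * U h = 1)
    (hST : ∀ h h', ∀ K ∈ blockSpace S (I (φ h)) (I (φ h')),
      (U h)ᴴ * K * U h' ∈ blockSpace T (J h) (J h')) : Cohom T S := by
  have regroup (h h' : Q) (M : Matrix A A ℂ) :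
      (I (φ h) * U h * (J h)ᴴ)ᴴ * M * (I (φ h') * U h' * (J h')ᴴ) =
        J h * ((U h)ᴴ * ((I (φ h))ᴴ * M * I (φ h')) * U h') * (J h')ᴴ := by
    simp only [conjTranspose_mul, conjTranspose_conjTranspose, Matrix.mul_assoc]
  refine cohom_of_fintype (fun h => I (φ h) * U h * (J h)ᴴ) ?_ fun h h' M hM => ?_
  · have gram_eq (h : Q) :
        (I (φ h) * U h * (J h)ᴴ)ᴴ * (I (φ h) * U h * (J h)ᴴ) = J h * (J h)ᴴ := by
      simpa only [Matrix.mul_one, hS.conjTranspose_mul_self, hU] using regroup h h 1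
    simp only [gram_eq, hT.sum_mul_conjTranspose]
  · rw [regroup]
    exact mem_blockSpace.1 (hST h h' _ (hS.conj_mem_blockSpace hM _ _))

theorem cohom_iff_special_form_general (hS : IsBlockDecomposition S I)
    (hT : IsBlockDecomposition T J) [∀ h, Nonempty (β h)] (hS₁ : 1 ∈ S)
    (diag_le : ∀ h, blockSpace T (J h) (J h) ≤ Submodule.span ℂ {1}) :
    Cohom T S ↔ ∃ (φ : Q → P) (U : ∀ h, Matrix (α (φ h)) (β h) ℂ), (∀ h, (U h)ᴴ * U h = 1) ∧
      ∀ h h', ∀ K ∈ blockSpace S (I (φ h)) (I (φ h')),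
        (U h)ᴴ * K * U h' ∈ blockSpace T (J h) (J h') :=
  ⟨fun hTS => hTS.exists_block_isometries hS hT hS₁ diag_le,
    fun ⟨φ, U, hU, hST⟩ => cohom_of_block_isometries hS hT φ U hU hST⟩

end Characterization

section BlockInclusion

variable {A P : Type*} [DecidableEq A] {α : P → Type*}

/-- The inclusion of the block `g` into `ℂ^A`, for an index set partitioned by
`e : (Σ g, α g) ≃ A`. -/
def blockInclusion (e : (Σ g, α g) ≃ A) (g : P) : Matrix A (α g) ℂ :=
  (1 : Matrix A A ℂ).submatrix id fun a => e ⟨g, a⟩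

lemma sum_blockInclusion_mul_conjTranspose [Fintype P] [∀ g, Fintype (α g)]
    (e : (Σ g, α g) ≃ A) : ∑ g, blockInclusion e g * (blockInclusion e g)ᴴ = 1 := by
  ext p q
  obtain ⟨x, rfl⟩ := e.surjective p
  calc (∑ g, blockInclusion e g * (blockInclusion e g)ᴴ) (e x) q
      = ∑ y : Σ g, α g, (1 : Matrix A A ℂ) (e x) (e y) * (1 : Matrix A A ℂ)ᴴ (e y) q := by
        rw [Matrix.sum_apply, Fintype.sum_sigma]
        rfl
    _ = (1 : Matrix A A ℂ) (e x) (e x) * (1 : Matrix A A ℂ)ᴴ (e x) q :=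
        Fintype.sum_eq_single x fun y hy => by
          rw [one_apply_ne (e.injective.ne hy.symm), zero_mul]
    _ = (1 : Matrix A A ℂ) (e x) q := by rw [one_apply_eq, one_mul, conjTranspose_one]

variable [Fintype A]

lemma conj_blockInclusion (e : (Σ g, α g) ≃ A) (M : Matrix A A ℂ) (g g' : P) :
    (blockInclusion e g)ᴴ * M * blockInclusion e g' =
      M.submatrix (fun a => e ⟨g, a⟩) fun b => e ⟨g', b⟩ := by
  rw [blockInclusion, blockInclusion, conjTranspose_submatrix, conjTranspose_one]
  exact (congrArg (· * _) (one_submatrix_mul _ (Equiv.refl A) M)).trans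
    (mul_submatrix_one (Equiv.refl A) _ _)

lemma conjTranspose_mul_blockInclusion (e : (Σ g, α g) ≃ A) (g g' : P) :
    (blockInclusion e g)ᴴ * blockInclusion e g' =
      (1 : Matrix A A ℂ).submatrix (fun a => e ⟨g, a⟩) fun b => e ⟨g', b⟩ := by
  rw [← conj_blockInclusion, Matrix.mul_one]

lemma conjTranspose_blockInclusion_mul_self [∀ g, DecidableEq (α g)] (e : (Σ g, α g) ≃ A)
    (g : P) : (blockInclusion e g)ᴴ * blockInclusion e g = 1 := by
  rw [conjTranspose_mul_blockInclusion]
  exact submatrix_one _ (e.injective.comp sigma_mk_injective)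

lemma conjTranspose_blockInclusion_mul_of_ne (e : (Σ g, α g) ≃ A) {g g' : P} (hgg' : g ≠ g') :
    (blockInclusion e g)ᴴ * blockInclusion e g' = 0 := by
  rw [conjTranspose_mul_blockInclusion]
  ext a b
  exact one_apply_ne fun hab => hgg' (congrArg Sigma.fst (e.injective hab))

variable [∀ g, Fintype (α g)] {e : (Σ g, α g) ≃ A}
  {S : Submodule ℂ (Matrix A A ℂ)} {𝒦 : ∀ g g', Submodule ℂ (Matrix (α g) (α g') ℂ)}

lemma blockSpace_blockInclusion
    (hS : ∀ M, M ∈ S ↔ ∀ g g', (blockInclusion e g)ᴴ * M * blockInclusion e g' ∈ 𝒦 g g')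
    (g g' : P) : blockSpace S (blockInclusion e g) (blockInclusion e g') = 𝒦 g g' := by
  classical
  have regroup (K : Matrix (α g) (α g') ℂ) (k k' : P) : (blockInclusion e k)ᴴ *
      (blockInclusion e g * K * (blockInclusion e g')ᴴ) * blockInclusion e k' =
        ((blockInclusion e k)ᴴ * blockInclusion e g) * K *
          ((blockInclusion e g')ᴴ * blockInclusion e k') := by
    simp only [Matrix.mul_assoc]
  ext K
  rw [mem_blockSpace, hS]
  simp only [regroup]
  refine ⟨fun hK => ?_, fun hK k k' => ?_⟩
  · simpa only [conjTranspose_blockInclusion_mul_self, Matrix.one_mul, Matrix.mul_one] using hK g g'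
  · by_cases hk : k = g
    · by_cases hk' : k' = g'
      · subst hk hk'
        simpa only [conjTranspose_blockInclusion_mul_self, Matrix.one_mul, Matrix.mul_one] using hK
      · simp [conjTranspose_blockInclusion_mul_of_ne e (Ne.symm hk')]
    · simp [conjTranspose_blockInclusion_mul_of_ne e hk]

lemma isBlockDecomposition_blockInclusion [Fintype P] [∀ g, DecidableEq (α g)]
    (hS : ∀ M, M ∈ S ↔ ∀ g g', (blockInclusion e g)ᴴ * M * blockInclusion e g' ∈ 𝒦 g g') :
    IsBlockDecomposition S (blockInclusion e) where
  conjTranspose_mul_self := conjTranspose_blockInclusion_mul_self e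
  sum_mul_conjTranspose := sum_blockInclusion_mul_conjTranspose e
  conj_mem_blockSpace hM g g' := by
    rw [blockSpace_blockInclusion hS]
    exact (hS _).1 hM g g'

end BlockInclusion

section VertexBlocks

lemma mem_graphNC_iff {X : Type} [Fintype X] [DecidableEq X] {G : SimpleGraph X}
    {C : Matrix X X ℂ} : C ∈ graphNC G ↔ ∀ x y, ¬(G.Adj x y ∨ x = y) → C x y = 0 := by
  refine ⟨fun hC x y hxy => ?_, fun hC => ?_⟩
  · induction hC using Submodule.span_induction with
    | mem M hM =>
      obtain ⟨x', y', hxy', rfl⟩ := hM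
      exact single_apply_of_ne _ _ _ _ _ (by rintro ⟨rfl, rfl⟩; exact hxy hxy')
    | zero => rfl
    | add C D _ _ hC hD => rw [Matrix.add_apply, hC, hD, add_zero]
    | smul c C _ hC => rw [Matrix.smul_apply, hC, smul_zero]
  · rw [matrix_eq_sum_single C]
    refine Submodule.sum_mem _ fun x _ => Submodule.sum_mem _ fun y _ => ?_
    by_cases hxy : G.Adj x y ∨ x = y
    · rw [← mul_one (C x y), ← smul_eq_mul, ← smul_single]
      exact Submodule.smul_mem _ _ (Submodule.subset_span ⟨x, y, hxy, rfl⟩)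
    · rw [hC x y hxy, single_zero]
      exact Submodule.zero_mem _

lemma mem_ncTensor_qGraph_iff {A : Type} [Fintype A] [DecidableEq A]
    {S : Submodule ℂ (Matrix A A ℂ)} {n : ℕ} {M : Matrix (A × Fin n) (A × Fin n) ℂ} :
    M ∈ ncTensor S (qGraph n) ↔ ∃ C ∈ S, M = C ⊗ₖ 1 := by
  refine ⟨fun hM => ?_, ?_⟩
  · induction hM using Submodule.span_induction with
    | mem M hM =>
      obtain ⟨C, hC, Y, hY, rfl⟩ := hM
      obtain ⟨c, rfl⟩ := Submodule.mem_span_singleton.1 hY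
      exact ⟨c • C, Submodule.smul_mem _ _ hC, by rw [kronecker_smul, smul_kronecker]⟩
    | zero => exact ⟨0, Submodule.zero_mem _, (zero_kronecker _).symm⟩
    | add M N _ _ hM hN =>
      obtain ⟨C, hC, rfl⟩ := hM
      obtain ⟨D, hD, rfl⟩ := hN
      exact ⟨C + D, Submodule.add_mem _ hC hD, (add_kronecker _ _ _).symm⟩
    | smul c M _ hM =>
      obtain ⟨C, hC, rfl⟩ := hM
      exact ⟨c • C, Submodule.smul_mem _ _ hC, (smul_kronecker _ _ _).symm⟩
  · rintro ⟨C, hC, rfl⟩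
    exact Submodule.subset_span ⟨C, hC, 1, Submodule.mem_span_singleton_self _, rfl⟩

lemma mem_ncTensor_graphNC_qGraph_iff {X : Type} [Fintype X] [DecidableEq X] {G : SimpleGraph X}
    {n : ℕ} {M : Matrix (X × Fin n) (X × Fin n) ℂ} :
    M ∈ ncTensor (graphNC G) (qGraph n) ↔ ∀ x y, ∃ c : ℂ,
      (¬(G.Adj x y ∨ x = y) → c = 0) ∧ M.submatrix (Prod.mk x) (Prod.mk y) = c • 1 := by
  rw [mem_ncTensor_qGraph_iff]
  refine ⟨?_, fun hM => ?_⟩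
  · rintro ⟨C, hC, rfl⟩ x y
    exact ⟨C x y, mem_graphNC_iff.1 hC x y, rfl⟩
  · choose C hC hMC using hM
    refine ⟨Matrix.of C, mem_graphNC_iff.2 hC, ?_⟩
    ext ⟨x, a⟩ ⟨y, b⟩
    exact congr_fun₂ (hMC x y) a b

variable {r : ℕ} {V : Fin r → Type}

lemma simRel_refl (G : ∀ d, SimpleGraph (V d)) (g : Σ d, V d) : SimRel G g g :=
  ⟨rfl, Or.inr rfl⟩

lemma simRel_mk_iff {G : ∀ d, SimpleGraph (V d)} {d : Fin r} {x y : V d} :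
    SimRel G ⟨d, x⟩ ⟨d, y⟩ ↔ (G d).Adj x y ∨ x = y :=
  ⟨fun ⟨_, hxy⟩ => hxy, fun hxy => ⟨rfl, hxy⟩⟩

/-- The `(g, g')` block of `⊕ Ḡ_d ⊗ Q_d`: it is `ℂ·I` if `g ≃ g'`, and `0` otherwise. The identity
is written in a form that makes sense before `π(g)` and `π(g')` are known to be equal. -/
def vertexBlock (G : ∀ d, SimpleGraph (V d)) (g g' : Σ d, V d) :
    Submodule ℂ (Matrix (Fin (g.1.1 + 1)) (Fin (g'.1.1 + 1)) ℂ) :=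
  Submodule.span ℂ {K | SimRel G g g' ∧ K = Matrix.of fun a b => if a.1 = b.1 then 1 else 0}

lemma vertexBlock_eq_bot {G : ∀ d, SimpleGraph (V d)} {g g' : Σ d, V d} (hG : ¬SimRel G g g') :
    vertexBlock G g g' = ⊥ := by
  simp [vertexBlock, hG]

lemma vertexBlock_mk {G : ∀ d, SimpleGraph (V d)} {d : Fin r} {x y : V d}
    (hG : SimRel G ⟨d, x⟩ ⟨d, y⟩) : vertexBlock G ⟨d, x⟩ ⟨d, y⟩ = Submodule.span ℂ {1} := by
  have one_eq : (1 : Matrix (Fin (d.1 + 1)) (Fin (d.1 + 1)) ℂ) =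
      Matrix.of fun a b => if a.1 = b.1 then 1 else 0 := by
    ext a b
    simp only [one_apply, of_apply, Fin.ext_iff]
  simp only [vertexBlock, hG, true_and, Set.ofPred_eq_eq_singleton, one_eq]

lemma mem_vertexBlock_mk_iff {G : ∀ d, SimpleGraph (V d)} {d : Fin r} {x y : V d}
    {K : Matrix (Fin (d.1 + 1)) (Fin (d.1 + 1)) ℂ} :
    K ∈ vertexBlock G ⟨d, x⟩ ⟨d, y⟩ ↔
      ∃ c : ℂ, (¬((G d).Adj x y ∨ x = y) → c = 0) ∧ K = c • 1 := by
  by_cases hG : SimRel G ⟨d, x⟩ ⟨d, y⟩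
  · have hxy : (G d).Adj x y ∨ x = y := simRel_mk_iff.1 hG
    simp only [vertexBlock_mk hG, Submodule.mem_span_singleton, hxy, not_true, false_implies,
      true_and, eq_comm]
  · have hxy : ¬((G d).Adj x y ∨ x = y) := simRel_mk_iff.not.1 hG
    simp only [vertexBlock_eq_bot hG, Submodule.mem_bot, hxy, not_false_eq_true, true_implies,
      exists_eq_left, zero_smul]

/-- The partition of the index set of `⊕ Ḡ_d ⊗ Q_d` into one copy of `Fin π(g)` for each
vertex `g`. -/
def vertexPartition (V : Fin r → Type) :
    (Σ g : Σ d, V d, Fin (g.1.1 + 1)) ≃ Σ d : Fin r, V d × Fin (d.1 + 1) :=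
  (Equiv.sigmaAssoc fun d (_ : V d) => Fin (d.1 + 1)).trans
    (Equiv.sigmaCongrRight fun d => Equiv.sigmaEquivProd (V d) (Fin (d.1 + 1)))

lemma forall_mem_vertexBlock_iff {s : ℕ} {W : Fin s → Type} {G : ∀ d, SimpleGraph (V d)}
    {H : ∀ d, SimpleGraph (W d)} {g g' : Σ d, V d} {h h' : Σ d, W d}
    {A : Matrix (Fin (g.1.1 + 1)) (Fin (h.1.1 + 1)) ℂ}
    {B : Matrix (Fin (g'.1.1 + 1)) (Fin (h'.1.1 + 1)) ℂ} :
    (∀ K ∈ vertexBlock G g g', Aᴴ * K * B ∈ vertexBlock H h h') ↔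
      (¬SimRel H h h' → (¬SimRel G g g' ∨ ∀ e : g.1 = g'.1,
        Aᴴ * B.submatrix (Fin.cast (congrArg (fun d : Fin r => d.1 + 1) e)) id = 0)) ∧
      (SimRel H h h' → SimRel G g g' → ∀ (e : h.1 = h'.1) (e' : g.1 = g'.1), ∃ c : ℂ,
        Aᴴ * B.submatrix (Fin.cast (congrArg (fun d : Fin r => d.1 + 1) e'))
          (Fin.cast (congrArg (fun d : Fin s => d.1 + 1) e)) = c • 1) := by
  by_cases hG : SimRel G g g'
  swap
  · simp [vertexBlock_eq_bot hG, hG]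
  obtain ⟨d, x⟩ := g
  obtain ⟨d', y⟩ := g'
  obtain rfl : d = d' := hG.1
  have forall_mem_iff : (∀ K ∈ vertexBlock G ⟨d, x⟩ ⟨d, y⟩, Aᴴ * K * B ∈ vertexBlock H h h') ↔
      Aᴴ * B ∈ vertexBlock H h h' := by
    rw [vertexBlock_mk hG]
    refine ⟨fun hAB => ?_, fun hAB K hK => ?_⟩
    · simpa only [Matrix.mul_one] using hAB 1 (Submodule.mem_span_singleton_self _)
    · obtain ⟨c, rfl⟩ := Submodule.mem_span_singleton.1 hK
      rw [Matrix.mul_smul, Matrix.smul_mul, Matrix.mul_one]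
      exact Submodule.smul_mem _ _ hAB
  rw [forall_mem_iff]
  by_cases hH : SimRel H h h'
  · obtain ⟨k, z⟩ := h
    obtain ⟨k', w⟩ := h'
    obtain rfl : k = k' := hH.1
    simp [vertexBlock_mk hH, hH, hG, Submodule.mem_span_singleton, eq_comm]
  · simp [vertexBlock_eq_bot hH, hH, hG]

variable [∀ d, Fintype (V d)] [∀ d, DecidableEq (V d)] {G : ∀ d, SimpleGraph (V d)}

lemma mem_bigSum_iff {M : Matrix (Σ d : Fin r, V d × Fin (d.1 + 1))
    (Σ d : Fin r, V d × Fin (d.1 + 1)) ℂ} :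
    M ∈ bigSum G ↔ ∀ g g', (blockInclusion (vertexPartition V) g)ᴴ * M *
      blockInclusion (vertexPartition V) g' ∈ vertexBlock G g g' := by
  simp only [conj_blockInclusion]
  refine ⟨?_, fun hM => ⟨?_, fun d => ?_⟩⟩
  · rintro ⟨off_diag, diag⟩ ⟨d, x⟩ ⟨d', y⟩
    by_cases hd : d = d'
    · subst hd
      exact mem_vertexBlock_mk_iff.2 (mem_ncTensor_graphNC_qGraph_iff.1 (diag d) x y)
    · rw [vertexBlock_eq_bot fun hG => hd hG.1, Submodule.mem_bot]
      ext a b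
      exact off_diag _ _ hd
  · rintro ⟨d, x, a⟩ ⟨d', y, b⟩ hd
    have hG : ¬SimRel G ⟨d, x⟩ ⟨d', y⟩ := fun hG => hd hG.1
    have block_eq_zero := hM ⟨d, x⟩ ⟨d', y⟩
    rw [vertexBlock_eq_bot hG, Submodule.mem_bot] at block_eq_zero
    exact congr_fun₂ block_eq_zero a b
  · exact mem_ncTensor_graphNC_qGraph_iff.2 fun x y =>
      mem_vertexBlock_mk_iff.1 (hM ⟨d, x⟩ ⟨d, y⟩)

lemma isBlockDecomposition_bigSum (G : ∀ d, SimpleGraph (V d)) :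
    IsBlockDecomposition (bigSum G) (blockInclusion (vertexPartition V)) :=
  isBlockDecomposition_blockInclusion fun _ => mem_bigSum_iff

lemma blockSpace_bigSum (G : ∀ d, SimpleGraph (V d)) (g g' : Σ d, V d) :
    blockSpace (bigSum G) (blockInclusion (vertexPartition V) g)
      (blockInclusion (vertexPartition V) g') = vertexBlock G g g' :=
  blockSpace_blockInclusion (fun _ => mem_bigSum_iff) g g'

lemma blockSpace_bigSum_self (G : ∀ d, SimpleGraph (V d)) (g : Σ d, V d) :
    blockSpace (bigSum G) (blockInclusion (vertexPartition V) g)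
      (blockInclusion (vertexPartition V) g) = Submodule.span ℂ {1} := by
  rw [blockSpace_bigSum, vertexBlock_mk (simRel_refl G g)]

lemma one_mem_bigSum (G : ∀ d, SimpleGraph (V d)) : 1 ∈ bigSum G := by
  rw [mem_bigSum_iff]
  intro g g'
  rw [Matrix.mul_one]
  by_cases hgg' : g = g'
  · subst hgg'
    rw [conjTranspose_blockInclusion_mul_self, vertexBlock_mk (simRel_refl G g)]
    exact Submodule.mem_span_singleton_self _
  · rw [conjTranspose_blockInclusion_mul_of_ne _ hgg']
    exact Submodule.zero_mem _

end VertexBlocks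

theorem cohom_iff_special_form
    {r : ℕ} {V W : Fin r → Type}
    [∀ d, Fintype (V d)] [∀ d, DecidableEq (V d)]
    [∀ d, Fintype (W d)] [∀ d, DecidableEq (W d)]
    (G : ∀ d, SimpleGraph (V d)) (H : ∀ d, SimpleGraph (W d)) :
    Cohom (bigSum H) (bigSum G) ↔
      ∃ (φ : (Σ d, W d) → (Σ d, V d))
        (U : ∀ h : Σ d, W d, Matrix (Fin ((φ h).1.1 + 1)) (Fin (h.1.1 + 1)) ℂ),
        (∀ h, (U h)ᴴ * U h = 1) ∧
        (∀ h h', ¬ SimRel H h h' →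
          (¬ SimRel G (φ h) (φ h') ∨
            ∀ e : (φ h).1 = (φ h').1,
              (U h)ᴴ *
                (U h').submatrix (Fin.cast (congrArg (fun d : Fin r => d.1 + 1) e)) id = 0)) ∧
        (∀ h h', SimRel H h h' → SimRel G (φ h) (φ h') →
          ∀ (e : h.1 = h'.1) (e' : (φ h).1 = (φ h').1),
            ∃ c : ℂ,
              (U h)ᴴ *
                (U h').submatrix (Fin.cast (congrArg (fun d : Fin r => d.1 + 1) e'))
                  (Fin.cast (congrArg (fun d : Fin r => d.1 + 1) e)) = c • 1) := by
  simpa only [blockSpace_bigSum, forall_mem_vertexBlock_iff, forall_and] using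
    cohom_iff_special_form_general (isBlockDecomposition_bigSum G) (isBlockDecomposition_bigSum H)
      (one_mem_bigSum G) fun h => (blockSpace_bigSum_self H h).le

end NCG
end
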